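/- arXiv:0906.3836 — 3 statements merged into one kernel-verified Lean document; each statement's English description precedes it below -/
import Mathlib

section
/- The barycenter of the polytope P := {w ∈ ℝ^7 : ⟨v_j, w⟩ ≥ −1 for all j = 1,...,12} is the origin: for each coordinate i = 1,...,7, the integral ∫_P w_i dw with respect to 7-dimensional Lebesgue measure equals 0 (and P has finite positive Lebesgue measure). (By the theorem of Wang–Zhu/Mabuchi, the vanishing of this barycenter is equivalent to the vanishing of the Futaki invariant of the Nill–Paffenholz toric Fano 7-fold, hence to the existence of a Kähler–Einstein metric on it.) -/
/-!
Write `t = w₆`. The slice of `P` at height `t ∈ [-1, 1]` is the product of the cube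
`[-1, 1 - t]³` of edge `2 - t` and the simplex `wⱼ ≥ -1`, `w₃ + w₄ + w₅ ≤ 1 + 2t` of size `4 + 2t`.
Its volume is therefore proportional to `(2 - t)³ (4 + 2t)³ = 8 (4 - t²)³`, an even function of `t`.

The integrals are not evaluated. They vanish because `P` is invariant under volume-preserving
involutions. The first is the fibrewise map `slabFlip`, which sends `t` to `-t`, scales the cube by
`(2 + t) / (2 - t)` and the simplex by the inverse factor; it gives `∫ w₆ = 0`. The others are linear
reflections: `wᵢ ↦ -wᵢ - t` on each cube coordinate gives `2 ∫ wᵢ = -∫ t = 0`, and exchanging the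
facet `wᵢ = -1` of the simplex with its slanted facet gives
`∫ (wᵢ + w₃ + w₄ + w₅ - 2t) = 0` for `i = 3, 4, 5`, a nonsingular linear system.
-/

open MeasureTheory

noncomputable section

/-- The twelve vertices of the Fano polytope of the Nill–Paffenholz toric Fano 7-fold. -/
def vs : Fin 12 → Fin 7 → ℝ :=
  ![![1,0,0,0,0,0,0], ![0,1,0,0,0,0,0], ![0,0,1,0,0,0,0],
    ![0,0,-1,0,0,0,-1], ![0,-1,0,0,0,0,-1], ![-1,0,0,0,0,0,-1],
    ![0,0,0,1,0,0,0], ![0,0,0,0,1,0,0], ![0,0,0,0,0,1,0],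
    ![0,0,0,-1,-1,-1,2], ![0,0,0,0,0,0,1], ![0,0,0,0,0,0,-1]]

/-- The polar dual polytope (the Delzant polytope of the anticanonically polarized
Nill–Paffenholz manifold): `P = {w : ⟨vⱼ, w⟩ ≥ -1 for all j}`. -/
def P : Set (Fin 7 → ℝ) := {w | ∀ j : Fin 12, -1 ≤ ∑ i : Fin 7, vs j i * w i}

/-! ### The polytope -/

/-- Membership in `P`, with the twelve facet inequalities written out. -/
lemma mem_P_iff (w : Fin 7 → ℝ) : w ∈ P ↔
    (-1 ≤ w 0 ∧ -1 ≤ w 1 ∧ -1 ≤ w 2) ∧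
    (w 2 + w 6 ≤ 1 ∧ w 1 + w 6 ≤ 1 ∧ w 0 + w 6 ≤ 1) ∧
    (-1 ≤ w 3 ∧ -1 ≤ w 4 ∧ -1 ≤ w 5) ∧
    w 3 + w 4 + w 5 - 2 * w 6 ≤ 1 ∧ -1 ≤ w 6 ∧ w 6 ≤ 1 := by
  simp only [P, Set.mem_ofPred_eq, vs, Fin.forall_fin_succ, Fin.sum_univ_succ]
  simp
  constructor
  · rintro ⟨h0, h1, h2, h3, h4, h5, h6, h7, h8, h9, h10, h11⟩
    refine ⟨⟨?_, ?_, ?_⟩, ⟨?_, ?_, ?_⟩, ⟨?_, ?_, ?_⟩, ?_, ?_, ?_⟩ <;> linarith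
  · rintro ⟨⟨h0, h1, h2⟩, ⟨h3, h4, h5⟩, ⟨h6, h7, h8⟩, h9, h10, h11⟩
    refine ⟨?_, ?_, ?_, ?_, ?_, ?_, ?_, ?_, ?_, ?_, ?_, ?_⟩ <;> linarith

lemma isClosed_P : IsClosed P := by
  simp only [P, Set.ofPred_forall]
  exact isClosed_iInter fun j => isClosed_le continuous_const (by fun_prop)

lemma P_subset_Icc : P ⊆ Set.Icc (fun _ => -1) (fun _ => 5) := by
  intro w hw
  obtain ⟨⟨h0, h1, h2⟩, ⟨h3, h4, h5⟩, ⟨h6, h7, h8⟩, h9, h10, h11⟩ := (mem_P_iff w).1 hw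
  constructor <;> intro i <;> fin_cases i <;> simp <;> linarith

lemma isCompact_P : IsCompact P := isCompact_Icc.of_isClosed_subset isClosed_P P_subset_Icc

lemma Icc_subset_P : Set.Icc (fun _ => -1 / 10) (fun _ => 1 / 10) ⊆ P := by
  rintro w ⟨h, h'⟩
  have := h 0; have := h 1; have := h 2; have := h 3; have := h 4; have := h 5; have := h 6
  have := h' 0; have := h' 1; have := h' 2; have := h' 3; have := h' 4; have := h' 5
  have := h' 6
  rw [mem_P_iff]
  refine ⟨⟨?_, ?_, ?_⟩, ⟨?_, ?_, ?_⟩, ⟨?_, ?_, ?_⟩, ?_, ?_, ?_⟩ <;> linarith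

lemma integrableOn_coord (i : Fin 7) : IntegrableOn (fun w : Fin 7 → ℝ => w i) P :=
  (continuous_apply i).continuousOn.integrableOn_compact isCompact_P

/-! ### Volume-preserving involutions -/

/-- Integrals over `P` are invariant under volume-preserving involutions that map `P` into
itself. -/
lemma setIntegral_P_comp {φ : (Fin 7 → ℝ) → Fin 7 → ℝ} (hφ : MeasurePreserving φ)
    (hinv : Function.Involutive φ) (hP : ∀ w ∈ P, φ w ∈ P) (i : Fin 7) :
    ∫ w in P, φ w i = ∫ w in P, w i := by
  have hpre : φ ⁻¹' P = P :=
    Set.Subset.antisymm (fun w hw => by simpa only [hinv w] using hP _ hw) hP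
  have hr := hφ.restrict_preimage isClosed_P.measurableSet
  rw [hpre] at hr
  have h := integral_map (μ := volume.restrict P) (f := fun w : Fin 7 → ℝ => w i) hr.measurable.aemeasurable
    (measurable_pi_apply i).aestronglyMeasurable
  rw [hr.map_eq] at h
  exact h.symm

/-- A linear involution has determinant `±1`, hence preserves volume. -/
lemma measurePreserving_of_linear_involutive (L : (Fin 7 → ℝ) →ₗ[ℝ] Fin 7 → ℝ)
    (hL : Function.Involutive L) : MeasurePreserving L := by
  have hd : LinearMap.det L * LinearMap.det L = 1 := by
    rw [← LinearMap.det_comp, show L ∘ₗ L = LinearMap.id from LinearMap.ext hL,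
      LinearMap.det_id]
  refine ⟨L.continuous_of_finiteDimensional.measurable, ?_⟩
  rw [Real.map_linearMap_volume_pi_eq_smul_volume_pi (by rintro h; simp [h] at hd)]
  rcases mul_self_eq_one_iff.1 hd with h | h <;> simp [h]

/-- If the reflection `w ↦ w - ℓ(w) eᵢ`, where `ℓ(eᵢ) = 2`, maps `P` into itself, then the linear
form `ℓ` integrates to zero over `P`. -/
lemma setIntegral_reflection (ℓ : (Fin 7 → ℝ) →ₗ[ℝ] ℝ) (i : Fin 7)
    (hℓ : ℓ (Pi.single i 1) = 2) (hP : ∀ w ∈ P, w - ℓ w • Pi.single i 1 ∈ P) :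
    ∫ w in P, ℓ w = 0 := by
  set L : (Fin 7 → ℝ) →ₗ[ℝ] Fin 7 → ℝ :=
    LinearMap.id - ℓ.smulRight (Pi.single i 1) with hLdef
  have hL : ∀ w, L w = w - ℓ w • Pi.single i 1 := fun w => by simp [hLdef]
  have hinv : Function.Involutive L := by
    intro w
    rw [hL, hL, map_sub, map_smul, hℓ, smul_eq_mul]
    module
  have h := setIntegral_P_comp (measurePreserving_of_linear_involutive L hinv) hinv
    (fun w hw => by rw [hL]; exact hP w hw) i
  have hint : IntegrableOn (fun w => ℓ w) P :=
    ℓ.continuous_of_finiteDimensional.continuousOn.integrableOn_compact isCompact_P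
  simp only [hL, Pi.sub_apply, Pi.smul_apply, Pi.single_eq_same, smul_eq_mul, mul_one] at h
  rw [integral_sub (integrableOn_coord i) hint] at h
  linarith

/-! ### The fibrewise flip `t ↦ -t` -/

/-- The ratio `(2 + t) / (2 - t)` of the edge lengths of the cubes in the slices of `P` at heights
`-t` and `t`. The height is clamped to `[-1, 1]`, the range of heights in `P`, so that the ratio is
positive for every real `t`. -/
def ratio (t : ℝ) : ℝ := (2 + max (-1) (min 1 t)) / (2 - max (-1) (min 1 t))

lemma ratio_pos (t : ℝ) : 0 < ratio t := by
  have h1 : -1 ≤ max (-1) (min 1 t) := le_max_left _ _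
  have h2 : max (-1) (min 1 t) ≤ 1 := max_le (by norm_num) (min_le_left _ _)
  exact div_pos (by linarith) (by linarith)

lemma ratio_neg (t : ℝ) : ratio (-t) = (ratio t)⁻¹ := by
  have h : max (-1) (min 1 (-t)) = -max (-1) (min 1 t) := by
    grind
  rw [ratio, ratio, h, inv_div]
  congr 1; ring

lemma ratio_eq {t : ℝ} (h : -1 ≤ t) (h' : t ≤ 1) : ratio t = (2 + t) / (2 - t) := by
  rw [ratio, min_eq_right h', max_eq_right h]

lemma measurable_ratio : Measurable ratio := by
  unfold ratio
  fun_prop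

/-- Scaling factors of `slabFlip`: `ratio t` on the cube coordinates, its inverse on the simplex
coordinates. -/
def scale (t : ℝ) : Fin 6 → ℝ :=
  ![ratio t, ratio t, ratio t, (ratio t)⁻¹, (ratio t)⁻¹, (ratio t)⁻¹]

/-- The map carrying the slice of `P` at height `t` onto the slice at height `-t`: a diagonal
scaling centred at `(-1, …, -1)`. -/
def flipFibre (t : ℝ) (y : Fin 6 → ℝ) : Fin 6 → ℝ := fun i => scale t i * (y i + 1) - 1

lemma measurable_scale (i : Fin 6) : Measurable fun t => scale t i := by
  have := measurable_ratio
  fin_cases i <;> simp [scale] <;> fun_prop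

lemma scale_neg_mul (t : ℝ) (i : Fin 6) : scale (-t) i * scale t i = 1 := by
  have := (ratio_pos t).ne'
  fin_cases i <;> simp [scale, ratio_neg, this]

/-- The scaling factors multiply to `1`, so each fibre map preserves six-dimensional volume. -/
lemma measurePreserving_flipFibre (t : ℝ) : MeasurePreserving (flipFibre t) := by
  have hr := (ratio_pos t).ne'
  have hdet : (Matrix.diagonal (scale t)).det = 1 := by
    rw [Matrix.det_diagonal]
    simp [scale, Fin.prod_univ_succ]
    field_simp
  have hlin : MeasurePreserving (Matrix.toLin' (Matrix.diagonal (scale t))) := by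
    refine ⟨(LinearMap.continuous_of_finiteDimensional _).measurable, ?_⟩
    rw [Real.map_matrix_volume_pi_eq_smul_volume_pi (by simp [hdet]), hdet]
    simp
  have h := (measurePreserving_add_right volume (fun _ : Fin 6 => (-1 : ℝ))).comp
    (hlin.comp (measurePreserving_add_right volume (fun _ : Fin 6 => (1 : ℝ))))
  have heq : flipFibre t = (fun x => x + fun _ => (-1 : ℝ)) ∘
      Matrix.toLin' (Matrix.diagonal (scale t)) ∘ (fun x => x + fun _ => (1 : ℝ)) := by
    funext y
    ext i
    simp [flipFibre, Matrix.mulVec_diagonal, sub_eq_add_neg]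
  rw [heq]
  exact h

/-- The measurable isomorphism `ℝ⁷ ≃ ℝ × ℝ⁶` splitting off the last coordinate. -/
def splitLast : (Fin 7 → ℝ) ≃ᵐ ℝ × (Fin 6 → ℝ) :=
  MeasurableEquiv.piFinSuccAbove (fun _ => ℝ) (Fin.last 6)

/-- The fibrewise flip, covering the reflection `t ↦ -t` of the last coordinate. -/
def slabFlip (w : Fin 7 → ℝ) : Fin 7 → ℝ :=
  splitLast.symm (-(splitLast w).1, flipFibre (splitLast w).1 (splitLast w).2)

lemma measurePreserving_slabFlip : MeasurePreserving slabFlip := by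
  have hs : MeasurePreserving splitLast :=
    volume_preserving_piFinSuccAbove (fun _ => ℝ) (Fin.last 6)
  have hm : Measurable (Function.uncurry flipFibre) := by
    refine measurable_pi_lambda _ fun i => ?_
    have := measurable_scale i
    simp only [Function.uncurry_def, flipFibre]
    fun_prop
  have hskew := (Measure.measurePreserving_neg (volume : Measure ℝ)).skew_product hm
    (Filter.Eventually.of_forall fun t => (measurePreserving_flipFibre t).map_eq)
  exact (hs.symm splitLast).comp (hskew.comp hs)

lemma slabFlip_involutive : Function.Involutive slabFlip := by
  intro w
  apply splitLast.injective
  simp only [slabFlip, MeasurableEquiv.apply_symm_apply, neg_neg]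
  refine Prod.ext rfl (funext fun i => ?_)
  simp only [flipFibre, sub_add_cancel, ← mul_assoc, scale_neg_mul]
  ring

lemma slabFlip_eq (w : Fin 7 → ℝ) : slabFlip w =
    ![ratio (w 6) * (w 0 + 1) - 1, ratio (w 6) * (w 1 + 1) - 1, ratio (w 6) * (w 2 + 1) - 1,
      (ratio (w 6))⁻¹ * (w 3 + 1) - 1, (ratio (w 6))⁻¹ * (w 4 + 1) - 1,
      (ratio (w 6))⁻¹ * (w 5 + 1) - 1, -w 6] := by
  funext i
  fin_cases i <;> rfl

lemma slabFlip_mem (w : Fin 7 → ℝ) (hw : w ∈ P) : slabFlip w ∈ P := by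
  obtain ⟨⟨h0, h1, h2⟩, ⟨h3, h4, h5⟩, ⟨h6, h7, h8⟩, h9, h10, h11⟩ := (mem_P_iff w).1 hw
  have hr := ratio_pos (w 6)
  have hs := inv_pos.2 hr
  -- The two upper bounds: a cube edge `2 - t` is scaled to `2 + t`, and the simplex size
  -- `4 + 2t` is scaled to `4 - 2t`.
  have hcube : ratio (w 6) * (2 - w 6) = 2 + w 6 := by
    rw [ratio_eq h10 h11, div_mul_cancel₀ _ (by linarith)]
  have hsimp : (ratio (w 6))⁻¹ * (4 + 2 * w 6) = 4 - 2 * w 6 := by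
    rw [inv_mul_eq_iff_eq_mul₀ hr.ne']
    linarith
  rw [mem_P_iff, slabFlip_eq]
  generalize ratio (w 6) = r at *
  generalize r⁻¹ = s at *
  simp
  refine ⟨⟨?_, ?_, ?_⟩, ⟨?_, ?_, ?_⟩, ⟨?_, ?_, ?_⟩, ?_, ?_, ?_⟩ <;> nlinarith

lemma setIntegral_last : ∫ w in P, w 6 = 0 := by
  have h := setIntegral_P_comp measurePreserving_slabFlip slabFlip_involutive slabFlip_mem 6
  have h6 : ∀ w, slabFlip w 6 = -w 6 := fun w => by rw [slabFlip_eq]; rfl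
  simp only [h6, integral_neg] at h
  linarith

/-! ### The remaining coordinates -/

/-- The `i`-th coordinate as a linear form. -/
def coord (i : Fin 7) : (Fin 7 → ℝ) →ₗ[ℝ] ℝ := LinearMap.proj i

@[simp]
lemma coord_apply (i : Fin 7) (w : Fin 7 → ℝ) : coord i w = w i := rfl

/-- The intervals `[-1, 1 - t]` of the cube coordinates are symmetric about `-t / 2`. -/
lemma setIntegral_cube {i : Fin 7} (hi : i = 0 ∨ i = 1 ∨ i = 2) : ∫ w in P, w i = 0 := by
  have h := setIntegral_reflection
    ((2 : ℝ) • coord i + coord 6) i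
    (by rcases hi with rfl | rfl | rfl <;> simp)
    (by
      intro w hw
      rw [mem_P_iff] at hw ⊢
      rcases hi with rfl | rfl | rfl <;> simp <;> grind)
  simp only [LinearMap.add_apply, LinearMap.smul_apply, coord_apply, smul_eq_mul] at h
  rw [integral_add ((integrableOn_coord i).const_mul 2) (integrableOn_coord 6),
    integral_const_mul, setIntegral_last] at h
  linarith

/-- Comes from the reflection exchanging the facets `wᵢ = -1` and `w₃ + w₄ + w₅ = 1 + 2 w₆`. -/
lemma setIntegral_simplex_relation {i : Fin 7} (hi : i = 3 ∨ i = 4 ∨ i = 5) :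
    (∫ w in P, w i) + (∫ w in P, w 3) + (∫ w in P, w 4) + (∫ w in P, w 5) = 0 := by
  have h := setIntegral_reflection
    (coord i + coord 3 + coord 4 + coord 5
      - (2 : ℝ) • coord 6) i
    (by rcases hi with rfl | rfl | rfl <;> simp <;> norm_num)
    (by
      intro w hw
      rw [mem_P_iff] at hw ⊢
      rcases hi with rfl | rfl | rfl <;> simp <;> grind)
  simp only [LinearMap.add_apply, LinearMap.sub_apply, LinearMap.smul_apply,
    coord_apply, smul_eq_mul] at h
  have hI := integrableOn_coord
  have hi3 : IntegrableOn (fun w => w i + w 3) P := (hI i).add (hI 3)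
  have hi4 : IntegrableOn (fun w => w i + w 3 + w 4) P := hi3.add (hI 4)
  have hi5 : IntegrableOn (fun w => w i + w 3 + w 4 + w 5) P := hi4.add (hI 5)
  rw [integral_sub hi5 ((hI 6).const_mul 2), integral_add hi4 (hI 5), integral_add hi3 (hI 4),
    integral_add (hI i) (hI 3),
    integral_const_mul, setIntegral_last] at h
  linarith

/-- The barycenter of `P` is the origin: `P` has finite positive Lebesgue measure and
each coordinate integrates to `0` over `P`.  (Equivalent, via Wang–Zhu/Mabuchi, to the
vanishing of the Futaki invariant, hence to the existence of a Kähler–Einstein metric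
on the Nill–Paffenholz toric Fano 7-fold.) -/
theorem P_barycenter_zero :
    volume P ≠ 0 ∧ volume P ≠ ⊤ ∧ ∀ i : Fin 7, ∫ w in P, w i ∂volume = 0 := by
  refine ⟨fun h => ?_, isCompact_P.measure_lt_top.ne, fun i => ?_⟩
  · have h0 := measure_mono_null Icc_subset_P h
    rw [Real.volume_Icc_pi] at h0
    norm_num at h0
  · have h3 := setIntegral_simplex_relation (i := 3) (by simp)
    have h4 := setIntegral_simplex_relation (i := 4) (by simp)
    have h5 := setIntegral_simplex_relation (i := 5) (by simp)
    fin_cases i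
    · exact setIntegral_cube (by simp)
    · exact setIntegral_cube (by simp)
    · exact setIntegral_cube (by simp)
    · change ∫ w in P, w 3 = 0
      linarith
    · change ∫ w in P, w 4 = 0
      linarith
    · change ∫ w in P, w 5 = 0
      linarith
    · exact setIntegral_last
end
end

section
/- Let G be the group of all ℝ-linear automorphisms g of ℝ^7 such that g(ℤ^7) = ℤ^7 and g maps the set {v_1,...,v_12} onto itself. Then the common fixed subspace {x ∈ ℝ^7 : g x = x for all g ∈ G} is exactly the one-dimensional subspace ℝ·(0,0,0,0,0,0,1). (This expresses that the Nill–Paffenholz toric Fano 7-fold is not symmetric in the sense of Batyrev–Selivanova, with Weyl-group-invariant subspace of dimension exactly one.) -/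
/-!
The fixed space contains `e₇ = (0,0,0,0,0,0,1)`: the twelve vertices are distinct and add up to
`-e₇`, and every element of the group permutes them, so it fixes their sum (`map_sum_vs`,
`sum_vs`).

Conversely, for each of the first six coordinates `a` the involution `x ↦ x - x a • c`, with
`c` integral and `c a = 2`, belongs to the group for a suitable `c`; it interchanges two vertices
and fixes the others. Its fixed vectors satisfy `x a = 0` (`coord_eq_zero`), so a common fixed
vector has only its last coordinate nonzero.
-/

noncomputable section

/-- The standard lattice ℤ⁷ inside ℝ⁷. -/
def latt : Set (Fin 7 → ℝ) := {x | ∀ i : Fin 7, ∃ z : ℤ, x i = (z : ℝ)}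

/-- The vertices with integer coordinates, so that statements about them are decidable. -/
def vsInt : Fin 12 → Fin 7 → ℤ :=
  ![![1,0,0,0,0,0,0], ![0,1,0,0,0,0,0], ![0,0,1,0,0,0,0],
    ![0,0,-1,0,0,0,-1], ![0,-1,0,0,0,0,-1], ![-1,0,0,0,0,0,-1],
    ![0,0,0,1,0,0,0], ![0,0,0,0,1,0,0], ![0,0,0,0,0,1,0],
    ![0,0,0,-1,-1,-1,2], ![0,0,0,0,0,0,1], ![0,0,0,0,0,0,-1]]

lemma vs_eq_cast (i : Fin 12) (k : Fin 7) : vs i k = (vsInt i k : ℝ) := by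
  fin_cases i <;> fin_cases k <;> simp [vs, vsInt]

lemma vs_injective : Function.Injective vs := by
  have h : Function.Injective vsInt := by decide
  intro i j hij
  apply h
  funext k
  have hk := congrFun hij k
  rw [vs_eq_cast, vs_eq_cast] at hk
  exact_mod_cast hk

lemma sum_vs : ∑ i, vs i = -Pi.single (6 : Fin 7) (1 : ℝ) := by
  have h : ∀ k, ∑ i, vsInt i k = -(Pi.single (6 : Fin 7) (1 : ℤ) : Fin 7 → ℤ) k := by decide
  funext k
  have hk := congrArg (Int.cast : ℤ → ℝ) (h k)
  simp only [Finset.sum_apply, vs_eq_cast, Pi.neg_apply, Pi.single_apply] at hk ⊢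
  push_cast at hk
  exact hk

lemma map_sum_vs (g : (Fin 7 → ℝ) ≃ₗ[ℝ] (Fin 7 → ℝ))
    (hg : ⇑g '' Set.range vs = Set.range vs) : g (∑ i, vs i) = ∑ i, vs i := by
  have h1 : ∑ᶠ y ∈ Set.range vs, y = ∑ i, vs i := by
    rw [finsum_mem_range vs_injective, finsum_eq_sum_of_fintype]
  have h2 : ∑ᶠ y ∈ ⇑g '' Set.range vs, y = ∑ i, g (vs i) := by
    rw [← Set.range_comp, finsum_mem_range (g.injective.comp vs_injective),
      finsum_eq_sum_of_fintype]
    rfl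
  rw [map_sum, ← h2, hg, h1]

lemma image_eq_of_involutive {α : Type*} {f : α → α} (hf : Function.Involutive f) {s : Set α}
    (hs : ∀ x ∈ s, f x ∈ s) : f '' s = s :=
  Set.Subset.antisymm (Set.image_subset_iff.2 hs) fun x hx => ⟨f x, hs x hx, hf x⟩

/-- If the integral reflection `x ↦ x - x a • c` maps vertices to vertices, then it is a member
of the group, and hence the `a`-th coordinate of every common fixed vector vanishes. -/
lemma coord_eq_zero (a : Fin 7) (c : Fin 7 → ℤ) (hc : c a = 2)
    (hv : ∀ i, ∃ j, ∀ k, vsInt j k = vsInt i k - vsInt i a * c k) {x : Fin 7 → ℝ}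
    (hx : ∀ g : (Fin 7 → ℝ) ≃ₗ[ℝ] (Fin 7 → ℝ),
      (⇑g '' latt = latt) → (⇑g '' Set.range vs = Set.range vs) → g x = x) :
    x a = 0 := by
  have h2 : (LinearMap.proj a : (Fin 7 → ℝ) →ₗ[ℝ] ℝ) (fun k => (c k : ℝ)) = 2 := by
    simp [hc]
  have happ : ∀ (y : Fin 7 → ℝ) (k : Fin 7),
      Module.reflection h2 y k = y k - y a * (c k : ℝ) := by
    intro y k
    simp [Module.reflection_apply]
  have hfix := hx (Module.reflection h2)
    (image_eq_of_involutive (Module.involutive_reflection h2) ?_)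
    (image_eq_of_involutive (Module.involutive_reflection h2) ?_)
  · have h := congrFun hfix a
    rw [happ, hc] at h
    push_cast at h
    linarith
  · intro y hy k
    obtain ⟨m, hm⟩ := hy k
    obtain ⟨n, hn⟩ := hy a
    refine ⟨m - n * c k, ?_⟩
    rw [happ, hm, hn]
    push_cast
    rfl
  · rintro _ ⟨i, rfl⟩
    obtain ⟨j, hj⟩ := hv i
    refine ⟨j, ?_⟩
    funext k
    rw [happ, vs_eq_cast, vs_eq_cast, vs_eq_cast, hj k]
    push_cast
    rfl

/-- The common fixed subspace of all lattice automorphisms of ℝ⁷ preserving the vertex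
set of the Fano polytope is exactly the line ℝ·(0,0,0,0,0,0,1): the Nill–Paffenholz
manifold is not symmetric, with Weyl-invariant subspace of dimension exactly one. -/
theorem fixed_space_is_line :
    {x : Fin 7 → ℝ |
        ∀ g : (Fin 7 → ℝ) ≃ₗ[ℝ] (Fin 7 → ℝ),
          (⇑g '' latt = latt) → (⇑g '' Set.range vs = Set.range vs) → g x = x}
      = {x : Fin 7 → ℝ | ∃ t : ℝ, x = t • (Pi.single (6 : Fin 7) (1 : ℝ) : Fin 7 → ℝ)} := by
  ext x
  simp only [Set.mem_ofPred_eq]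
  constructor
  · intro hx
    -- Each `c` is `e_a` minus the vertex interchanged with `e_a`.
    have h0 := coord_eq_zero 0 ![2,0,0,0,0,0,1] (by decide) (by decide) hx
    have h1 := coord_eq_zero 1 ![0,2,0,0,0,0,1] (by decide) (by decide) hx
    have h2 := coord_eq_zero 2 ![0,0,2,0,0,0,1] (by decide) (by decide) hx
    have h3 := coord_eq_zero 3 ![0,0,0,2,1,1,-2] (by decide) (by decide) hx
    have h4 := coord_eq_zero 4 ![0,0,0,1,2,1,-2] (by decide) (by decide) hx
    have h5 := coord_eq_zero 5 ![0,0,0,1,1,2,-2] (by decide) (by decide) hx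
    refine ⟨x 6, ?_⟩
    funext k
    fin_cases k <;> simp [h0, h1, h2, h3, h4, h5]
  · rintro ⟨t, rfl⟩ g _ hg
    have h := map_sum_vs g hg
    rw [sum_vs, map_neg, neg_inj] at h
    rw [map_smul, h]
end
end

section
/- For every real t > 0, the family of real numbers ((a_1 + 2a_2 + 3a_3 + 4a_4 + 5a_5 + 6a_6 + 7a_7)·exp(−8 t a_8)) indexed by the lattice points a = (a_1,...,a_8) ∈ C* ∩ ℤ^8 is (absolutely) summable, and its sum equals −184·e^{−8t}·(2e^{−32t} + 31e^{−24t} + 70e^{−16t} + 31e^{−8t} + 2)/(e^{−8t} − 1)^7; in particular this sum is nonzero for every t > 0. (This is the derivative ∂/∂x at x = 1 of the specialized Hilbert series C(x^1, x^2, ..., x^7, e^{−8t}) of the toric diagram; its nonvanishing shows, via the relation between derivatives of the Hilbert series and the invariants F_{Td^p}, that not all obstructions F_{Td^p} of the Nill–Paffenholz toric Fano 7-fold vanish, hence the manifold is asymptotically Chow unstable despite admitting a Kähler–Einstein metric.) -/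
/-!
The lattice points of the toric diagram are graded by the height `a₈ = n`, and the slice at height
`n` is finite.  With `a₇ = n - p`, `0 ≤ p ≤ 2n`, the slice splits into pieces which are products of
a cube `0 ≤ aᵢ + n ≤ n + p` (`i = 1, 2, 3`) and a simplex `aᵢ + n ≥ 0` (`i = 4, 5, 6`),
`∑ (aᵢ + n) ≤ 6n - 2p`.  On each piece the weight `a₁ + 2a₂ + ⋯ + 7a₇` is affine, so its sum is the
number of points times its value `23/2 * (n - p)` at the barycentre.  Summing over `p` leaves a
polynomial of degree 6 in `n` (`sum_slice`); in the basis `(n + k).choose k` its generating function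
is a combination of the `1 / (1 - q) ^ (k + 1)`, with `q = e^{-8t}` (`hasSum_slicePoly`).

Absolute summability holds because the slice at height `n` lies in a box of side `O(n)`, so its
contribution is at most a polynomial in `n` times `q ^ n`.

In these comments the coordinates are `a₁, …, a₈`; in the code they are `a 0, …, a 7`.
-/

noncomputable section

/-- `λⱼ = (vⱼ, 1) ∈ ℝ⁸`. -/
def lam (j : Fin 12) : Fin 8 → ℝ := Fin.snoc (vs j) 1

/-- The toric diagram `C* = {y ∈ ℝ⁸ : ⟨λⱼ, y⟩ ≥ 0 for all j}`. -/
def Cstar : Set (Fin 8 → ℝ) := {y | ∀ j : Fin 12, 0 ≤ ∑ i : Fin 8, lam j i * y i}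

/-- The lattice points of the toric diagram: `C* ∩ ℤ⁸`. -/
def latticePts : Set (Fin 8 → ℤ) := {a | (fun i => (a i : ℝ)) ∈ Cstar}

/-! ### Lattice points by height -/

/-- Index set of the lattice points at height `n`.  A member `⟨p, b₁, b₂, b₃, s₃, s₂, c⟩` records
`a₇ = n - p`, the shifted cube coordinates `bᵢ = aᵢ + n`, and the simplex coordinates through the
partial sums `c ≤ s₂ ≤ s₃ ≤ 6n - 2p` of `a₄ + n, a₅ + n, a₆ + n`. The natural subtraction
`6n - 2p` never truncates, as `p ≤ 2n`. -/
def sliceIdx (n : ℕ) :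
    Finset (Σ _ : ℕ, Σ _ : ℕ, Σ _ : ℕ, Σ _ : ℕ, Σ _ : ℕ, Σ _ : ℕ, ℕ) :=
  (Finset.range (2 * n + 1)).sigma fun p =>
    (Finset.range (n + p + 1)).sigma fun _ =>
      (Finset.range (n + p + 1)).sigma fun _ =>
        (Finset.range (n + p + 1)).sigma fun _ =>
          (Finset.range (6 * n - 2 * p + 1)).sigma fun s₃ =>
            (Finset.range (s₃ + 1)).sigma fun s₂ => Finset.range (s₂ + 1)

/-- The lattice point at height `n` with the given index. -/
def slicePt (n : ℕ) (x : Σ _ : ℕ, Σ _ : ℕ, Σ _ : ℕ, Σ _ : ℕ, Σ _ : ℕ, Σ _ : ℕ, ℕ) :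
    Fin 8 → ℤ :=
  match x with
  | ⟨p, b₁, b₂, b₃, s₃, s₂, c⟩ =>
    ![b₁ - n, b₂ - n, b₃ - n, c - n, s₂ - c - n, s₃ - s₂ - n, n - p, n]

lemma mem_latticePts_iff (a : Fin 8 → ℤ) :
    a ∈ latticePts ↔
      (0 ≤ a 0 + a 7 ∧ 0 ≤ a 1 + a 7 ∧ 0 ≤ a 2 + a 7) ∧
      (0 ≤ -a 2 - a 6 + a 7 ∧ 0 ≤ -a 1 - a 6 + a 7 ∧ 0 ≤ -a 0 - a 6 + a 7) ∧
      (0 ≤ a 3 + a 7 ∧ 0 ≤ a 4 + a 7 ∧ 0 ≤ a 5 + a 7) ∧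
      (0 ≤ -a 3 - a 4 - a 5 + 2 * a 6 + a 7) ∧
      (0 ≤ a 6 + a 7 ∧ 0 ≤ -a 6 + a 7) := by
  have key : ∀ y : Fin 8 → ℝ, y ∈ Cstar ↔
      (0 ≤ y 0 + y 7 ∧ 0 ≤ y 1 + y 7 ∧ 0 ≤ y 2 + y 7) ∧
      (0 ≤ -y 2 - y 6 + y 7 ∧ 0 ≤ -y 1 - y 6 + y 7 ∧ 0 ≤ -y 0 - y 6 + y 7) ∧
      (0 ≤ y 3 + y 7 ∧ 0 ≤ y 4 + y 7 ∧ 0 ≤ y 5 + y 7) ∧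
      (0 ≤ -y 3 - y 4 - y 5 + 2 * y 6 + y 7) ∧
      (0 ≤ y 6 + y 7 ∧ 0 ≤ -y 6 + y 7) := by
    intro y
    have hl : ∀ j, ∑ i : Fin 8, lam j i * y i = ∑ i : Fin 7, vs j i * y i.castSucc + y 7 := by
      intro j
      rw [Fin.sum_univ_castSucc]
      simp only [lam, Fin.snoc_castSucc, Fin.snoc_last, one_mul]
      rfl
    have e : ∀ P : Fin 12 → Prop, (∀ j, P j) ↔
        (P 0 ∧ P 1 ∧ P 2) ∧ (P 3 ∧ P 4 ∧ P 5) ∧ (P 6 ∧ P 7 ∧ P 8) ∧ P 9 ∧ (P 10 ∧ P 11) := by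
      intro P
      refine ⟨fun h => by simp [h], fun h j => ?_⟩
      fin_cases j <;> simp_all
    simp only [Cstar, Set.mem_ofPred_eq, hl]
    rw [e]
    simp [vs, Fin.sum_univ_succ, Fin.succ]
    ring_nf
    simp
  simp only [latticePts, Set.mem_ofPred_eq, key]
  norm_cast

lemma slicePt_mem {n : ℕ} {x} (hx : x ∈ sliceIdx n) : slicePt n x ∈ latticePts := by
  obtain ⟨p, b₁, b₂, b₃, s₃, s₂, c⟩ := x
  simp only [sliceIdx, Finset.mem_sigma, Finset.mem_range] at hx
  rw [mem_latticePts_iff]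
  simp [slicePt]
  omega

lemma slicePt_injective (n : ℕ) : Function.Injective (slicePt n) := by
  rintro ⟨p, b₁, b₂, b₃, s₃, s₂, c⟩ ⟨p', b₁', b₂', b₃', s₃', s₂', c'⟩ h
  have h0 := congrFun h 0
  have h1 := congrFun h 1
  have h2 := congrFun h 2
  have h3 := congrFun h 3
  have h4 := congrFun h 4
  have h5 := congrFun h 5
  have h6 := congrFun h 6
  simp [slicePt] at h0 h1 h2 h3 h4 h5 h6
  obtain rfl : b₁ = b₁' := by omega
  obtain rfl : b₂ = b₂' := by omega
  obtain rfl : b₃ = b₃' := by omega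
  obtain rfl : c = c' := by omega
  obtain rfl : s₂ = s₂' := by omega
  obtain rfl : s₃ = s₃' := by omega
  obtain rfl : p = p' := by omega
  rfl

lemma slicePt_height (n : ℕ) (x) : slicePt n x 7 = n := by
  simp [slicePt]

/-- Every lattice point of the toric diagram lies in exactly one slice. -/
lemma slice_bijective :
    Function.Bijective (fun x : Σ n : ℕ, sliceIdx n =>
      (⟨slicePt x.1 x.2.1, slicePt_mem x.2.2⟩ : latticePts)) := by
  constructor
  · rintro ⟨n, x, hx⟩ ⟨m, y, hy⟩ h
    have h' : slicePt n x = slicePt m y := congrArg Subtype.val h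
    obtain rfl : n = m := by
      have := congrFun h' 7
      rw [slicePt_height, slicePt_height] at this
      exact_mod_cast this
    obtain rfl := slicePt_injective n h'
    rfl
  · rintro ⟨a, ha⟩
    have h := (mem_latticePts_iff a).1 ha
    obtain ⟨n, hn⟩ := Int.eq_ofNat_of_zero_le (show 0 ≤ a 7 by omega)
    obtain ⟨p, hp⟩ := Int.eq_ofNat_of_zero_le (show 0 ≤ n - a 6 by omega)
    obtain ⟨b₁, hb₁⟩ := Int.eq_ofNat_of_zero_le (show 0 ≤ a 0 + n by omega)
    obtain ⟨b₂, hb₂⟩ := Int.eq_ofNat_of_zero_le (show 0 ≤ a 1 + n by omega)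
    obtain ⟨b₃, hb₃⟩ := Int.eq_ofNat_of_zero_le (show 0 ≤ a 2 + n by omega)
    obtain ⟨c, hc⟩ := Int.eq_ofNat_of_zero_le (show 0 ≤ a 3 + n by omega)
    obtain ⟨s₂, hs₂⟩ := Int.eq_ofNat_of_zero_le (show 0 ≤ a 3 + a 4 + 2 * n by omega)
    obtain ⟨s₃, hs₃⟩ := Int.eq_ofNat_of_zero_le (show 0 ≤ a 3 + a 4 + a 5 + 3 * n by omega)
    refine ⟨⟨n, ⟨p, b₁, b₂, b₃, s₃, s₂, c⟩, ?_⟩, ?_⟩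
    · simp only [sliceIdx, Finset.mem_sigma, Finset.mem_range]
      omega
    · apply Subtype.ext
      funext i
      fin_cases i <;> simp [slicePt] <;> omega

/-- Reindexing of the lattice points by height and position in the slice. -/
def sliceEquiv : (Σ n : ℕ, sliceIdx n) ≃ latticePts :=
  Equiv.ofBijective _ slice_bijective

/-! ### The sum over one slice -/

/-- The weight `a₁ + 2a₂ + ⋯ + 7a₇`. -/
def wt (a : Fin 8 → ℤ) : ℝ := ∑ i : Fin 7, ((i : ℝ) + 1) * (a i.castSucc : ℝ)

lemma wt_eq (a : Fin 8 → ℤ) :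
    wt a = a 0 + 2 * a 1 + 3 * a 2 + 4 * a 3 + 5 * a 4 + 6 * a 5 + 7 * a 6 := by
  simp [wt, Fin.sum_univ_succ, Fin.succ]
  ring

lemma sum_affine {N : ℕ} {f : ℕ → ℝ} (α β : ℝ) (hf : ∀ k : ℕ, f k = α + β * k) :
    ∑ k ∈ Finset.range (N + 1), f k = (N + 1) * (α + β * N / 2) := by
  simp only [hf]
  induction N with
  | zero => simp
  | succ N ih => rw [Finset.sum_range_succ, ih]; push_cast; ring

/-- The sum of `α + 4c₁ + 5c₂ + 6c₃` over the simplex `c₁ + c₂ + c₃ ≤ N`, in the partial sums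
`c = c₁`, `s₂ = c₁ + c₂`, `s₃ = c₁ + c₂ + c₃`. -/
lemma sum_simplex (N : ℕ) (α : ℝ) :
    ∑ s₃ ∈ Finset.range (N + 1), ∑ s₂ ∈ Finset.range (s₃ + 1), ∑ c ∈ Finset.range (s₂ + 1),
      (α + 4 * c + 5 * (s₂ - c) + 6 * (s₃ - s₂) : ℝ) =
    (N + 1) * (N + 2) * (N + 3) / 6 * (α + 15 * N / 4) := by
  have h1 : ∀ s₃ s₂ : ℕ, ∑ c ∈ Finset.range (s₂ + 1),
      (α + 4 * c + 5 * (s₂ - c) + 6 * (s₃ - s₂) : ℝ) =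
        (s₂ + 1) * (α + 6 * s₃ - 3 / 2 * s₂) := by
    intro s₃ s₂
    rw [sum_affine (α + 6 * s₃ - s₂) (-1) (fun c => by ring)]
    ring
  have h2 : ∀ (K : ℕ) (A : ℝ), ∑ s ∈ Finset.range (K + 1), ((s + 1) * (A - 3 / 2 * s) : ℝ) =
      (K + 1) * (K + 2) / 2 * (A - K) := by
    intro K A
    induction K with
    | zero => simp
    | succ K ih => rw [Finset.sum_range_succ, ih]; push_cast; ring
  simp only [h1, h2]
  induction N with
  | zero => simp; ring
  | succ N ih => rw [Finset.sum_range_succ, ih]; push_cast; ring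

/-- The sum of the weight over the piece of the slice with `a₇ = n - p`. -/
lemma sum_piece (n p : ℕ) (hp : p ≤ 2 * n) :
    ∑ b₁ ∈ Finset.range (n + p + 1), ∑ b₂ ∈ Finset.range (n + p + 1),
      ∑ b₃ ∈ Finset.range (n + p + 1), ∑ s₃ ∈ Finset.range (6 * n - 2 * p + 1),
        ∑ s₂ ∈ Finset.range (s₃ + 1), ∑ c ∈ Finset.range (s₂ + 1),
          wt (slicePt n ⟨p, b₁, b₂, b₃, s₃, s₂, c⟩) =
    23 / 12 * (n - p) * (n + p + 1) ^ 3 *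
      ((6 * n - 2 * p + 1) * (6 * n - 2 * p + 2) * (6 * n - 2 * p + 3)) := by
  have hw : ∀ b₁ b₂ b₃ s₃ s₂ c : ℕ, wt (slicePt n ⟨p, b₁, b₂, b₃, s₃, s₂, c⟩) =
      (b₁ + 2 * b₂ + 3 * b₃ - 14 * n - 7 * p : ℝ) + 4 * c + 5 * (s₂ - c) + 6 * (s₃ - s₂) := by
    intro b₁ b₂ b₃ s₃ s₂ c
    rw [wt_eq]
    simp [slicePt]
    ring
  have hN : ((6 * n - 2 * p : ℕ) : ℝ) = 6 * n - 2 * p := by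
    rw [Nat.cast_sub (by omega)]; push_cast; ring
  simp only [hw, sum_simplex, hN]
  generalize hV : ((6 * n - 2 * p + 1) * (6 * n - 2 * p + 2) * (6 * n - 2 * p + 3) / 6 : ℝ) = V
  have h3 : ∀ b₁ b₂ : ℕ, ∑ b₃ ∈ Finset.range (n + p + 1),
      V * (b₁ + 2 * b₂ + 3 * b₃ - 14 * n - 7 * p + 15 * (6 * n - 2 * p) / 4 : ℝ) =
      V * (n + p + 1) *
        (b₁ + 2 * b₂ + 3 * (n + p) / 2 - 14 * n - 7 * p + 15 * (6 * n - 2 * p) / 4) := by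
    intro b₁ b₂
    rw [sum_affine (V * (b₁ + 2 * b₂ - 14 * n - 7 * p + 15 * (6 * n - 2 * p) / 4)) (3 * V)
      (fun b₃ => by ring)]
    push_cast
    ring
  have h2 : ∀ b₁ : ℕ, ∑ b₂ ∈ Finset.range (n + p + 1),
      V * (n + p + 1) *
        (b₁ + 2 * b₂ + 3 * (n + p) / 2 - 14 * n - 7 * p + 15 * (6 * n - 2 * p) / 4 : ℝ) =
      V * (n + p + 1) ^ 2 *
        (b₁ + 5 * (n + p) / 2 - 14 * n - 7 * p + 15 * (6 * n - 2 * p) / 4) := by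
    intro b₁
    rw [sum_affine (V * (n + p + 1) *
        (b₁ + 3 * (n + p) / 2 - 14 * n - 7 * p + 15 * (6 * n - 2 * p) / 4))
      (2 * V * (n + p + 1)) (fun b₂ => by ring)]
    push_cast
    ring
  simp only [h3, h2]
  rw [sum_affine (V * (n + p + 1) ^ 2 *
      (5 * (n + p) / 2 - 14 * n - 7 * p + 15 * (6 * n - 2 * p) / 4))
    (V * (n + p + 1) ^ 2) (fun b₁ => by ring), ← hV]
  push_cast
  ring

/-- Faulhaber-type closed form for the sum of the pieces with `p ≤ M`, polynomial in `M`
with coefficients in `ℚ[n]`. -/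
lemma sum_pieces (n : ℝ) (M : ℕ) :
    ∑ p ∈ Finset.range (M + 1), (23 / 12 * (n - p) * (n + p + 1) ^ 3 *
      ((6 * n - 2 * p + 1) * (6 * n - 2 * p + 2) * (6 * n - 2 * p + 3))) =
    ((4140 * n + 57960 * n ^ 2 + 298080 * n ^ 3 + 736920 * n ^ 4 + 939780 * n ^ 5 +
        596160 * n ^ 6 + 149040 * n ^ 7) +
      (-1518 - 35466 * n - 157320 * n ^ 2 - 125580 * n ^ 3 + 471270 * n ^ 4 + 997740 * n ^ 5 +
        670680 * n ^ 6 + 149040 * n ^ 7) * M +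
      (5405 - 5520 * n - 275310 * n ^ 2 - 793500 * n ^ 3 - 625830 * n ^ 4 - 24840 * n ^ 5 +
        74520 * n ^ 6) * M ^ 2 +
      (8280 + 95220 * n + 103500 * n ^ 2 - 361560 * n ^ 3 - 411240 * n ^ 4 -
        82800 * n ^ 5) * M ^ 3 +
      (-6325 + 50370 * n + 246330 * n ^ 2 + 35880 * n ^ 3 - 51060 * n ^ 4) * M ^ 4 +
      (-9522 - 35604 * n + 91080 * n ^ 2 + 27600 * n ^ 3) * M ^ 5 +
      (230 - 30360 * n + 8280 * n ^ 2) * M ^ 6 +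
      (2760 - 5520 * n) * M ^ 7 +
      690 * M ^ 8) / 360 := by
  induction M with
  | zero => simp; ring
  | succ M ih => rw [Finset.sum_range_succ, ih]; push_cast; ring

/-- The sum of the weight over the slice at height `n`, as a polynomial in `n`. -/
def slicePoly (n : ℝ) : ℝ :=
  1564 / 45 * n ^ 6 + 1564 / 15 * n ^ 5 + 1127 / 9 * n ^ 4 + 230 / 3 * n ^ 3 +
    1081 / 45 * n ^ 2 + 46 / 15 * n

lemma sum_slice (n : ℕ) : ∑ x ∈ sliceIdx n, wt (slicePt n x) = slicePoly n := by
  simp only [sliceIdx, Finset.sum_sigma]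
  rw [Finset.sum_congr rfl (fun p hp => sum_piece n p (by
    rw [Finset.mem_range] at hp; omega)), sum_pieces]
  simp only [slicePoly]
  push_cast
  ring

/-! ### Summation over the heights -/

lemma hasSum_slicePoly {q : ℝ} (hq : ‖q‖ < 1) (hq1 : q ≠ 1) :
    HasSum (fun n : ℕ => slicePoly n * q ^ n)
      (-184 * q * (2 * q ^ 4 + 31 * q ^ 3 + 70 * q ^ 2 + 31 * q + 2) / (q - 1) ^ 7) := by
  have hs := fun k : ℕ => hasSum_choose_mul_geometric_of_norm_lt_one (𝕜 := ℝ) k hq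
  have hc : ∀ n k : ℕ, ((n + (k + 1)).choose (k + 1) : ℝ) =
      (n + k + 1) * (n + k).choose k / (k + 1) := by
    intro n k
    rw [eq_div_iff (by positivity)]
    exact_mod_cast (Nat.add_one_mul_choose_eq (n + k) k).symm
  -- The coefficients expand `slicePoly n` in the basis `(n + k).choose k`, `k = 6, …, 1`.
  have h := ((((((hs 6).mul_left 25024).add ((hs 5).mul_left (-75072))).add
    ((hs 4).mul_left 82248)).add ((hs 3).mul_left (-39376))).add
    ((hs 2).mul_left 7544)).add ((hs 1).mul_left (-368))
  have hval : -184 * q * (2 * q ^ 4 + 31 * q ^ 3 + 70 * q ^ 2 + 31 * q + 2) / (q - 1) ^ 7 =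
      25024 * (1 / (1 - q) ^ (6 + 1)) + -75072 * (1 / (1 - q) ^ (5 + 1)) +
      82248 * (1 / (1 - q) ^ (4 + 1)) + -39376 * (1 / (1 - q) ^ (3 + 1)) +
      7544 * (1 / (1 - q) ^ (2 + 1)) + -368 * (1 / (1 - q) ^ (1 + 1)) := by
    have h1 : (1 - q) ≠ 0 := sub_ne_zero.2 hq1.symm
    have h2 : (q - 1) ^ 7 = -(1 - q) ^ 7 := by ring
    rw [h2]
    field_simp
    ring
  rw [hval]
  refine h.congr_fun fun n => ?_
  rw [hc n 5, hc n 4, hc n 3, hc n 2, hc n 1, hc n 0]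
  simp only [slicePoly, Nat.add_zero, Nat.choose_zero_right]
  push_cast
  ring

/-- The coordinates of the points at height `n` are bounded by `6n`. -/
lemma abs_slicePt_le {n : ℕ} {x} (hx : x ∈ sliceIdx n) (i : Fin 8) :
    |slicePt n x i| ≤ 6 * n := by
  obtain ⟨p, b₁, b₂, b₃, s₃, s₂, c⟩ := x
  simp only [sliceIdx, Finset.mem_sigma, Finset.mem_range] at hx
  rw [abs_le]
  fin_cases i <;> simp [slicePt] <;> omega

lemma card_sliceIdx_le (n : ℕ) : (sliceIdx n).card ≤ (12 * n + 1) ^ 8 := by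
  have h : (sliceIdx n).card ≤
      (Fintype.piFinset fun _ : Fin 8 => Finset.Icc (-(6 * n : ℤ)) (6 * n)).card := by
    refine Finset.card_le_card_of_injOn (slicePt n) ?_ (slicePt_injective n).injOn
    intro x hx
    simp only [Finset.mem_coe, Fintype.mem_piFinset, Finset.mem_Icc]
    exact fun i => abs_le.1 (abs_slicePt_le hx i)
  refine h.trans (le_of_eq ?_)
  rw [Fintype.card_piFinset_const, Int.card_Icc]
  congr 1
  omega

lemma abs_wt_le {n : ℕ} {x} (hx : x ∈ sliceIdx n) : |wt (slicePt n x)| ≤ 168 * n := by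
  have h : ∀ i, -(6 * n : ℝ) ≤ slicePt n x i ∧ (slicePt n x i : ℝ) ≤ 6 * n := by
    intro i
    have := abs_le.1 (abs_slicePt_le hx i)
    exact ⟨by exact_mod_cast this.1, by exact_mod_cast this.2⟩
  rw [wt_eq, abs_le]
  have h0 := h 0
  have h1 := h 1
  have h2 := h 2
  have h3 := h 3
  have h4 := h 4
  have h5 := h 5
  have h6 := h 6
  constructor <;> linarith

lemma summable_abs_slices {q : ℝ} (hq0 : 0 < q) (hq : q < 1) :
    Summable (fun x : Σ n : ℕ, sliceIdx n => |wt (slicePt x.1 x.2.1) * q ^ x.1|) := by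
  rw [summable_sigma_of_nonneg (fun _ => abs_nonneg _)]
  refine ⟨fun n => Summable.of_finite, ?_⟩
  obtain ⟨C, hC⟩ : ∃ C : ℝ, C = 168 * 13 ^ 8 := ⟨_, rfl⟩
  have hmaj : Summable (fun n : ℕ => C * ((n : ℝ) ^ 9 * q ^ n)) :=
    (summable_pow_mul_geometric_of_norm_lt_one 9
      (by rwa [Real.norm_of_nonneg hq0.le])).mul_left C
  refine Summable.of_nonneg_of_le (fun n => tsum_nonneg fun _ => abs_nonneg _) (fun n => ?_) hmaj
  rw [tsum_fintype, Finset.sum_coe_sort (sliceIdx n) (fun x => |wt (slicePt n x) * q ^ n|)]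
  have h1 : ∀ x ∈ sliceIdx n, |wt (slicePt n x) * q ^ n| ≤ 168 * n * q ^ n := by
    intro x hx
    rw [abs_mul, abs_of_pos (pow_pos hq0 n)]
    exact mul_le_mul_of_nonneg_right (abs_wt_le hx) (pow_pos hq0 n).le
  refine (Finset.sum_le_card_nsmul _ _ _ h1).trans ?_
  rw [nsmul_eq_mul]
  rcases Nat.eq_zero_or_pos n with rfl | hn
  · simp
  have h2 : ((sliceIdx n).card : ℝ) ≤ (13 * n) ^ 8 := by
    have : (sliceIdx n).card ≤ (13 * n) ^ 8 :=
      (card_sliceIdx_le n).trans (Nat.pow_le_pow_left (by omega) 8)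
    exact_mod_cast this
  calc ((sliceIdx n).card : ℝ) * (168 * n * q ^ n)
      ≤ (13 * n) ^ 8 * (168 * n * q ^ n) := by gcongr
    _ = C * ((n : ℝ) ^ 9 * q ^ n) := by rw [hC]; ring

/-- The derivative at `x = 1` of the specialized Hilbert series
`C(x¹, x², …, x⁷, e^{-8t})` of the toric diagram of the Nill–Paffenholz toric Fano
7-fold: for every `t > 0` the family `(a₁ + 2a₂ + ⋯ + 7a₇)·e^{-8t a₈}` over the lattice
points `a ∈ C* ∩ ℤ⁸` is absolutely summable, its sum equals
`-184·e^{-8t}·(2e^{-32t} + 31e^{-24t} + 70e^{-16t} + 31e^{-8t} + 2)/(e^{-8t} - 1)⁷`,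
and in particular this sum is nonzero.  Hence not all obstructions `F_{Td^p}` vanish,
so the manifold is asymptotically Chow unstable despite being Kähler–Einstein. -/
theorem hilbert_series_derivative_nonzero (t : ℝ) (ht : 0 < t) :
    Summable (fun a : latticePts =>
      |(∑ i : Fin 7, ((i : ℝ) + 1) * (a.1 i.castSucc : ℝ)) *
        Real.exp (-8 * t * (a.1 7 : ℝ))|) ∧
    HasSum (fun a : latticePts =>
      (∑ i : Fin 7, ((i : ℝ) + 1) * (a.1 i.castSucc : ℝ)) *
        Real.exp (-8 * t * (a.1 7 : ℝ)))
      (-184 * Real.exp (-8 * t) *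
        (2 * Real.exp (-32 * t) + 31 * Real.exp (-24 * t) + 70 * Real.exp (-16 * t) +
          31 * Real.exp (-8 * t) + 2) / (Real.exp (-8 * t) - 1) ^ 7) ∧
    -184 * Real.exp (-8 * t) *
        (2 * Real.exp (-32 * t) + 31 * Real.exp (-24 * t) + 70 * Real.exp (-16 * t) +
          31 * Real.exp (-8 * t) + 2) / (Real.exp (-8 * t) - 1) ^ 7 ≠ 0 := by
  have hq0 : 0 < Real.exp (-8 * t) := Real.exp_pos _
  have hq : Real.exp (-8 * t) < 1 := Real.exp_lt_one_iff.2 (by linarith)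
  have e2 : Real.exp (-16 * t) = Real.exp (-8 * t) ^ 2 := by
    rw [← Real.exp_nat_mul]; congr 1; push_cast; ring
  have e3 : Real.exp (-24 * t) = Real.exp (-8 * t) ^ 3 := by
    rw [← Real.exp_nat_mul]; congr 1; push_cast; ring
  have e4 : Real.exp (-32 * t) = Real.exp (-8 * t) ^ 4 := by
    rw [← Real.exp_nat_mul]; congr 1; push_cast; ring
  have en : ∀ n : ℕ, Real.exp (-8 * t * n) = Real.exp (-8 * t) ^ n := by
    intro n
    rw [← Real.exp_nat_mul, mul_comm]
  have hf : ∀ x : Σ n : ℕ, sliceIdx n,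
      (∑ i : Fin 7, ((i : ℝ) + 1) * ((sliceEquiv x).1 i.castSucc : ℝ)) *
        Real.exp (-8 * t * ((sliceEquiv x).1 7 : ℝ)) =
      wt (slicePt x.1 x.2.1) * Real.exp (-8 * t) ^ x.1 := by
    intro x
    have h7 : (sliceEquiv x).1 7 = x.1 := slicePt_height x.1 x.2.1
    rw [h7, Int.cast_natCast, en]
    rfl
  have habs := summable_abs_slices hq0 hq
  refine ⟨?_, ?_, ?_⟩
  · rw [← sliceEquiv.summable_iff]
    exact habs.congr fun x => by rw [Function.comp_apply, hf]
  · rw [← sliceEquiv.hasSum_iff]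
    simp only [Function.comp_def, hf]
    have hsum : Summable (fun x : Σ n : ℕ, sliceIdx n =>
        wt (slicePt x.1 x.2.1) * Real.exp (-8 * t) ^ x.1) := habs.of_abs
    have hslice : ∀ n : ℕ, HasSum (fun x : sliceIdx n =>
        wt (slicePt n x.1) * Real.exp (-8 * t) ^ n) (slicePoly n * Real.exp (-8 * t) ^ n) := by
      intro n
      rw [← sum_slice, Finset.sum_mul, ← Finset.sum_coe_sort]
      exact hasSum_fintype _
    rw [e2, e3, e4, (hsum.hasSum.sigma hslice).unique
      (hasSum_slicePoly (by rwa [Real.norm_of_nonneg hq0.le]) hq.ne) |>.symm]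
    exact hsum.hasSum
  · exact div_ne_zero (mul_ne_zero (by positivity) (by positivity))
      (pow_ne_zero _ (sub_ne_zero.2 hq.ne))
end
end
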